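/- arXiv:1803.04174 — 2 statements merged into one kernel-verified Lean document; each statement's English description precedes it below -/
import Mathlib

section
/- Let q_1 < q_2 < ... < q_n be positive rational numbers and let Q be the n×n matrix with (i,j) entry (q_i + q_j)^(q_i + q_j). Then for every real r > 0, the entrywise power Q^{∘r} (with (i,j) entry (q_i + q_j)^{(q_i + q_j)r}) is positive definite and strictly totally positive. -/
/-!
The kernel `(x + y) ^ ((x + y) * r)` is, up to positive diagonal scaling, the entrywise exponential
of `r` times `K₀`, where `K_s(x, y) = (x + y) log (x + y + s) - x log (x + s) - y log (y + s)`.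
As `s → ∞`, the kernel `K_s` tends to `0`, and `-∂K_s/∂s` is a diagonal scaling of `1 + s C`, with
`C` a translate of the Cauchy kernel `1 / (x + y)`. The Cauchy kernel is positive definite because
deflating one node splits off a square, so the quadratic form of `K_s` strictly decreases to `0` and
`K₀` is positive definite; by Schur's product theorem, so is the exponential.

Rational nodes lie on a grid `h, 2h, 3h, …`, on which a kernel depending on `x + y` is a Hankel
matrix. Its minors on consecutive rows and consecutive columns are principal minors of the kernel at
shifted nodes, hence positive. By Fekete's criterion all minors are then positive: a three-term
Plücker relation expresses a minor whose rows have a gap through minors of smaller order or with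
rows in a shorter range.
-/

open Filter Matrix Set Topology

section PosDef

variable {ι : Type*} {M : Matrix ι ι ℝ}

theorem posDef_diagonal_scaling (hM : M.PosDef) {d : ι → ℝ} (hd : ∀ i, d i ≠ 0) :
    (of fun i j => d i * M i j * d j).PosDef := by
  refine ⟨IsHermitian.ext fun i j => ?_, fun c hc => ?_⟩
  · have hsymm : M j i = M i j := hM.isHermitian.apply i j
    simp only [of_apply, star_trivial, hsymm]
    ring
  · let dc : ι →₀ ℝ := Finsupp.onFinset c.support (fun i => d i * c i) fun i hi => by
      simpa [hd i] using hi
    have support_dc : dc.support = c.support := by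
      ext i
      simp [dc, hd i]
    have dc_ne_zero : dc ≠ 0 := by
      rwa [Ne, ← Finsupp.support_eq_empty, support_dc, Finsupp.support_eq_empty]
    have h := hM.2 dc_ne_zero
    simp only [Finsupp.sum, support_dc] at h
    simpa [Finsupp.sum, dc, mul_assoc, mul_left_comm, mul_comm] using h

theorem posSemidef_of_one : (of fun _ _ : ι => (1 : ℝ)).PosSemidef := by
  refine ⟨IsHermitian.ext fun i j => by simp, fun c => ?_⟩
  simpa [Finsupp.sum, Finset.sum_mul_sum] using mul_self_nonneg (∑ i ∈ c.support, c i)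

theorem posSemidef_map_pow (hM : M.PosSemidef) (k : ℕ) : (M.map (· ^ k)).PosSemidef := by
  induction k with
  | zero =>
    have map_zero : M.map (· ^ 0) = of fun _ _ => 1 := by
      ext i j
      exact pow_zero _
    exact map_zero ▸ posSemidef_of_one
  | succ k ih =>
    have map_succ : M.map (· ^ (k + 1)) = M.map (· ^ k) ⊙ M := by
      ext i j
      exact pow_succ _ _
    exact map_succ ▸ ih.hadamard hM

theorem posDef_map_of_hasSum (hM : M.PosDef) {f : ℝ → ℝ} {a : ℕ → ℝ} (ha : ∀ k, 0 ≤ a k)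
    (ha_one : 0 < a 1) (hf : ∀ i j, HasSum (fun k => a k * M i j ^ k) (f (M i j))) :
    (M.map f).PosDef := by
  refine ⟨hM.isHermitian.map f fun _ => rfl, fun c hc => ?_⟩
  let term (k : ℕ) : ℝ := c.sum fun i ci => c.sum fun j cj => star ci * (a k * M i j ^ k) * cj
  have hasSum_form : HasSum term (c.sum fun i ci => c.sum fun j cj => star ci * f (M i j) * cj) :=
    hasSum_sum fun i _ => hasSum_sum fun j _ => ((hf i j).mul_left _).mul_right _
  have term_nonneg (k : ℕ) : 0 ≤ term k :=
    ((posSemidef_map_pow hM.posSemidef k).smul (ha k)).2 c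
  have term_one_pos : 0 < term 1 := by simpa [term] using (hM.smul ha_one).2 hc
  exact term_one_pos.trans_le (le_hasSum hasSum_form 1 fun k _ => term_nonneg k)

theorem posDef_map_exp (hM : M.PosDef) : (M.map Real.exp).PosDef := by
  refine posDef_map_of_hasSum hM (a := fun k => (k.factorial : ℝ)⁻¹) (fun k => by positivity)
    (by simp) fun i j => ?_
  simpa [Real.exp_eq_exp_ℝ, div_eq_inv_mul] using NormedSpace.expSeries_div_hasSum_exp (M i j)

end PosDef

section CauchyKernel

theorem cauchyForm_eq_add_sq (s : Finset (Ioi (0 : ℝ))) (c : Ioi (0 : ℝ) → ℝ) (z : Ioi (0 : ℝ)) :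
    ∑ x ∈ s, ∑ y ∈ s, c x * (x + y : ℝ)⁻¹ * c y =
      (∑ x ∈ s, ∑ y ∈ s, (c x * ((x - z) / (x + z))) * (x + y : ℝ)⁻¹ *
        (c y * ((y - z) / (y + z)))) + 2 * z * (∑ x ∈ s, c x / (x + z)) ^ 2 := by
  rw [sq, Finset.sum_mul_sum]
  simp only [Finset.mul_sum, ← Finset.sum_add_distrib]
  refine Finset.sum_congr rfl fun x _ => Finset.sum_congr rfl fun y _ => ?_
  have hxy : (x + y : ℝ) ≠ 0 := (add_pos x.2 y.2).ne'
  have hxz : (x + z : ℝ) ≠ 0 := (add_pos x.2 z.2).ne'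
  have hyz : (y + z : ℝ) ≠ 0 := (add_pos y.2 z.2).ne'
  field_simp
  ring

theorem cauchyForm_pos (s : Finset (Ioi (0 : ℝ))) (c : Ioi (0 : ℝ) → ℝ) (hc : ∃ x ∈ s, c x ≠ 0) :
    0 < ∑ x ∈ s, ∑ y ∈ s, c x * (x + y : ℝ)⁻¹ * c y := by
  induction s using Finset.induction_on generalizing c with
  | empty => simp at hc
  | insert z s hz ih =>
    have z_pos : (0 : ℝ) < z := z.2
    by_cases hs : ∃ x ∈ s, c x ≠ 0
    · obtain ⟨x, hx, hcx⟩ := hs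
      have hxz : (x - z : ℝ) ≠ 0 := sub_ne_zero.2 fun h => hz (Subtype.ext h ▸ hx)
      have hxz' : (x + z : ℝ) ≠ 0 := (add_pos x.2 z.2).ne'
      have deflated_pos := ih (fun x => c x * ((x - z) / (x + z)))
        ⟨x, hx, mul_ne_zero hcx (div_ne_zero hxz hxz')⟩
      rw [cauchyForm_eq_add_sq _ c z]
      refine add_pos_of_pos_of_nonneg ?_ (by positivity)
      simpa [Finset.sum_insert hz] using deflated_pos
    · push Not at hs
      have vanish (x) (hx : x ∈ insert z s) (hxz : x ≠ z) : c x = 0 :=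
        hs x (Finset.mem_of_mem_insert_of_ne hx hxz)
      have hcz : c z ≠ 0 := by
        obtain ⟨x, hx, hcx⟩ := hc
        rwa [← not_imp_comm.1 (vanish x hx) hcx]
      have hz := Finset.mem_insert_self z s
      rw [Finset.sum_eq_single_of_mem z hz fun x hx hxz => by simp [vanish x hx hxz],
        Finset.sum_eq_single_of_mem z hz fun y hy hyz => by simp [vanish y hy hyz], mul_right_comm]
      exact mul_pos (mul_self_pos.2 hcz) (by positivity)

theorem posDef_cauchyKernel : (of fun x y : Ioi (0 : ℝ) => (x + y : ℝ)⁻¹).PosDef := by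
  refine ⟨IsHermitian.ext fun x y => by simp [add_comm], fun c hc => ?_⟩
  obtain ⟨x, hx⟩ := Finsupp.support_nonempty_iff.2 hc
  exact cauchyForm_pos c.support c ⟨x, hx, Finsupp.mem_support_iff.1 hx⟩

end CauchyKernel

section LogKernel

theorem lt_of_deriv_neg_of_tendsto_atTop {f : ℝ → ℝ} {a l : ℝ} (hcont : ContinuousOn f (Ici a))
    (hderiv : ∀ s > a, deriv f s < 0) (hlim : Tendsto f atTop (𝓝 l)) : l < f a := by
  have hanti : StrictAntiOn f (Ici a) :=
    strictAntiOn_of_deriv_neg (convex_Ici a) hcont (by simpa using hderiv)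
  have hnext : a + 1 ∈ Ici a := by simp
  refine lt_of_le_of_lt ?_ (hanti self_mem_Ici hnext (lt_add_one a))
  refine le_of_tendsto hlim ?_
  filter_upwards [eventually_ge_atTop (a + 1)] with s hs
  exact hanti.antitoneOn hnext (le_trans hnext hs) hs

/-- The kernel `K_s`, a path from the logarithm of `(x + y) ^ (x + y) / (x ^ x * y ^ y)` at `s = 0`
to the zero kernel at `s = ∞`. -/
noncomputable def logDefect (s x y : ℝ) : ℝ :=
  (x + y) * Real.log (x + y + s) - x * Real.log (x + s) - y * Real.log (y + s)

/-- The rate `-∂K_s/∂s` at which `logDefect` decreases, written as a diagonal scaling of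
`1 + s / (x + y + s)` to exhibit its positive definiteness. -/
noncomputable def logDefectDecay (s x y : ℝ) : ℝ :=
  x / (x + s) * (1 + s * (x + y + s)⁻¹) * (y / (y + s))

theorem hasDerivAt_logDefect {s x y : ℝ} (hs : 0 ≤ s) (hx : 0 < x) (hy : 0 < y) :
    HasDerivAt (fun s => logDefect s x y) (-logDefectDecay s x y) s := by
  have hlog {t : ℝ} (ht : 0 < t) : HasDerivAt (fun s => t * Real.log (t + s)) (t / (t + s)) s := by
    simpa [div_eq_mul_inv] using
      (((hasDerivAt_id s).const_add t).log (add_pos_of_pos_of_nonneg ht hs).ne').const_mul t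
  refine (((hlog (add_pos hx hy)).sub (hlog hx)).sub (hlog hy)).congr_deriv ?_
  rw [logDefectDecay]
  field_simp
  ring

theorem tendsto_logDefect_atTop (x y : ℝ) :
    Tendsto (fun s => logDefect s x y) atTop (𝓝 0) := by
  have hsub (t u : ℝ) :
      Tendsto (fun s => Real.log (t + s) - Real.log (u + s)) atTop (𝓝 0) := by
    simpa [add_comm] using
      (Real.tendsto_log_comp_add_sub_log t).sub (Real.tendsto_log_comp_add_sub_log u)
  have h := ((hsub (x + y) x).const_mul x).add ((hsub (x + y) y).const_mul y)
  simp only [mul_zero, add_zero] at h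
  refine h.congr fun s => ?_
  rw [logDefect]
  ring

theorem posDef_logDefectDecay {s : ℝ} (hs : 0 < s) :
    (of fun x y : Ioi (0 : ℝ) => logDefectDecay s x y).PosDef := by
  let shift (x : Ioi (0 : ℝ)) : Ioi (0 : ℝ) := ⟨x + s / 2, add_pos x.2 (half_pos hs)⟩
  have shift_injective : Function.Injective shift := fun x y h =>
    Subtype.ext (add_right_cancel (congrArg Subtype.val h))
  have cauchy := posDef_cauchyKernel.submatrix shift_injective
  have shift_add (x y : Ioi (0 : ℝ)) : (shift x + shift y : ℝ) = x + y + s := by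
    simp only [shift]
    ring
  convert posDef_diagonal_scaling ((cauchy.smul hs).posSemidef_add posSemidef_of_one)
    (d := fun x => x / (x + s)) (fun x => (div_pos x.2 (add_pos x.2 hs)).ne') using 1
  ext x y
  simp [logDefectDecay, shift_add]

theorem posDef_logDefect : (of fun x y : Ioi (0 : ℝ) => logDefect 0 x y).PosDef := by
  refine ⟨IsHermitian.ext fun x y => ?_, fun c hc => ?_⟩
  · simp only [of_apply, star_trivial, logDefect, add_comm (x : ℝ)]
    ring
  · let form (s : ℝ) : ℝ := c.sum fun x cx => c.sum fun y cy => cx * logDefect s x y * cy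
    have form_deriv {s : ℝ} (hs : 0 ≤ s) : HasDerivAt form
        (c.sum fun x cx => c.sum fun y cy => cx * -logDefectDecay s x y * cy) s :=
      HasDerivAt.fun_sum fun x _ => HasDerivAt.fun_sum fun y _ =>
        ((hasDerivAt_logDefect hs x.2 y.2).const_mul (c x)).mul_const (c y)
    have form_lim : Tendsto form atTop (𝓝 0) := by
      simpa [form, Finsupp.sum] using tendsto_finsetSum c.support fun x _ =>
        tendsto_finsetSum c.support fun y _ =>
          ((tendsto_logDefect_atTop x y).const_mul (c x)).mul_const (c y)
    refine lt_of_deriv_neg_of_tendsto_atTop (f := form)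
      (fun s hs => (form_deriv hs).continuousAt.continuousWithinAt) (fun s hs => ?_) form_lim
    rw [(form_deriv hs.le).deriv]
    simpa [Finsupp.sum] using (posDef_logDefectDecay hs).2 hc

theorem rpow_add_self_eq_exp_logDefect {x y : ℝ} (hx : 0 < x) (hy : 0 < y) (r : ℝ) :
    (x + y) ^ ((x + y) * r) = Real.exp (r * (x * Real.log x)) * Real.exp (r * logDefect 0 x y) *
      Real.exp (r * (y * Real.log y)) := by
  rw [Real.rpow_def_of_pos (add_pos hx hy), ← Real.exp_add, ← Real.exp_add]
  simp only [logDefect, add_zero]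
  ring_nf

theorem posDef_rpow_add_self {r : ℝ} (hr : 0 < r) :
    (of fun x y : Ioi (0 : ℝ) => (x + y : ℝ) ^ ((x + y : ℝ) * r)).PosDef := by
  convert posDef_diagonal_scaling (posDef_map_exp (posDef_logDefect.smul hr))
    (d := fun x => Real.exp (r * (x * Real.log x))) (fun _ => (Real.exp_pos _).ne') using 1
  ext x y
  exact rpow_add_self_eq_exp_logDefect x.2 y.2 r

end LogKernel

section Plucker

variable {R : Type*} [CommRing R]

theorem sum_neg_one_pow_mul_mulVec_mul_det_succAbove {n : ℕ} (B : Matrix (Fin (n + 1)) (Fin n) R)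
    (y : Fin n → R) :
    ∑ i : Fin (n + 1), (-1) ^ (i : ℕ) * (B *ᵥ y) i * (B.submatrix i.succAbove id).det = 0 := by
  let A : Matrix (Fin (n + 1)) (Fin (n + 1)) R := of fun i => Fin.cons ((B *ᵥ y) i) (B i)
  have kernel : A *ᵥ Fin.cons (-1) y = 0 := by
    ext i
    simp [A, mulVec, dotProduct, Fin.sum_univ_succ]
  have det_eq_zero : A.det = 0 := by
    have h : A.det • (Fin.cons (-1) y : Fin (n + 1) → R) = 0 := by
      rw [← one_mulVec (Fin.cons (-1) y), ← smul_mulVec, ← adjugate_mul, ← mulVec_mulVec, kernel,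
        mulVec_zero]
    simpa using congrFun h 0
  rw [← det_eq_zero, det_succ_column_zero]
  rfl

theorem det_insertNth {m : ℕ} (N : Fin m → Fin (m + 1) → R) (v : Fin (m + 1) → R)
    (p : Fin (m + 1)) :
    (of (p.insertNth v N)).det = (-1) ^ (p : ℕ) *
      (v ⬝ᵥ fun j => (-1) ^ (j : ℕ) * ((of N).submatrix id j.succAbove).det) := by
  rw [det_succ_row _ p, dotProduct, Finset.mul_sum]
  refine Finset.sum_congr rfl fun j _ => ?_
  have minor_eq : (of (p.insertNth v N)).submatrix p.succAbove j.succAbove =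
      (of N).submatrix id j.succAbove := by
    ext i k
    simp
  rw [minor_eq, of_apply, Fin.insertNth_apply_same]
  ring

theorem det_vecCons_eq_neg_one_pow_mul_det_insertNth {m : ℕ} (N : Fin m → Fin (m + 1) → R)
    (v : Fin (m + 1) → R) (p : Fin (m + 1)) :
    (of (vecCons v N)).det = (-1) ^ (p : ℕ) * (of (p.insertNth v N)).det := by
  have sign : (-1 : R) ^ (p : ℕ) * (-1) ^ (p : ℕ) = 1 := by simp [← mul_pow]
  have vecCons_eq : vecCons v N = Fin.insertNth 0 v N := (Fin.insertNth_zero' v N).symm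
  rw [vecCons_eq, det_insertNth, det_insertNth, ← mul_assoc, sign, Fin.val_zero, pow_zero]

theorem sum_det_vecCons_mul_det_succAbove {m : ℕ} (N : Fin m → Fin (m + 1) → R)
    (B : Matrix (Fin (m + 3)) (Fin (m + 2)) R) :
    ∑ i : Fin (m + 3), (-1) ^ (i : ℕ) * (of (vecCons (fun j => B i j.castSucc) N)).det *
      (B.submatrix i.succAbove id).det = 0 := by
  convert sum_neg_one_pow_mul_mulVec_mul_det_succAbove B
    (Fin.snoc (fun j => (-1) ^ (j : ℕ) * ((of N).submatrix id j.succAbove).det) 0) using 4 with i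
  rw [det_vecCons_eq_neg_one_pow_mul_det_insertNth N _ 0, det_insertNth]
  simp [mulVec, dotProduct, Fin.sum_univ_castSucc]

theorem det_submatrix_plucker {m : ℕ} (B : Matrix (Fin (m + 3)) (Fin (m + 2)) R)
    (p : Fin (m + 1)) :
    (B.submatrix (Fin.succ ∘ Fin.castSucc) Fin.castSucc).det *
        (B.submatrix p.castSucc.succ.succAbove id).det =
      (B.submatrix (Fin.castSucc ∘ p.succ.succAbove) Fin.castSucc).det *
          (B.submatrix Fin.succ id).det +
        (B.submatrix (Fin.succ ∘ p.castSucc.succAbove) Fin.castSucc).det *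
          (B.submatrix Fin.castSucc id).det := by
  let row (i : Fin (m + 3)) (j : Fin (m + 1)) : R := B i j.castSucc
  let N (i : Fin m) : Fin (m + 1) → R := row (p.succAbove i).castSucc.succ
  have first : of (vecCons (row 0) N) =
      B.submatrix (Fin.castSucc ∘ p.succ.succAbove) Fin.castSucc := by
    ext i j
    cases i using Fin.cases <;> simp [N, row]
  have middle : of (p.insertNth (row p.castSucc.succ) N) =
      B.submatrix (Fin.succ ∘ Fin.castSucc) Fin.castSucc :=
    Fin.insertNth_self_removeNth p fun i => row i.castSucc.succ
  have last : of (Fin.insertNth (Fin.last m) (row (Fin.last _)) N) =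
      B.submatrix (Fin.succ ∘ p.castSucc.succAbove) Fin.castSucc := by
    ext i j
    cases i using Fin.lastCases <;> simp [N, row]
  have repeated_row (i : Fin (m + 1)) (hi : i ≠ p) :
      (of (vecCons (row i.castSucc.succ) N)).det = 0 := by
    obtain ⟨k, rfl⟩ := Fin.exists_succAbove_eq hi
    exact det_zero_of_row_eq (Fin.succ_ne_zero k).symm rfl
  have h := sum_det_vecCons_mul_det_succAbove N B
  change ∑ i : Fin (m + 3), (-1) ^ (i : ℕ) * (of (vecCons (row i) N)).det * _ = 0 at h
  rw [Fin.sum_univ_succ, Fin.sum_univ_castSucc,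
    Finset.sum_eq_single p (fun i _ hi => by simp [repeated_row i hi]) (by simp), first,
    det_vecCons_eq_neg_one_pow_mul_det_insertNth N _ p, middle, Fin.succ_last,
    det_vecCons_eq_neg_one_pow_mul_det_insertNth N _ (Fin.last m), last] at h
  simp only [Fin.val_zero, pow_zero, one_mul, Fin.succAbove_zero, Fin.val_succ, Fin.val_castSucc,
    Fin.val_last, Fin.succAbove_last, Nat.succ_eq_add_one] at h
  have sign (k : ℕ) : (-1 : R) ^ k * (-1) ^ k = 1 := by simp [← mul_pow]
  linear_combination -h -
    sign p * ((B.submatrix (Fin.succ ∘ Fin.castSucc) Fin.castSucc).det *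
      (B.submatrix p.castSucc.succ.succAbove id).det) +
    sign m * ((B.submatrix (Fin.succ ∘ p.castSucc.succAbove) Fin.castSucc).det *
      (B.submatrix Fin.castSucc id).det)

end Plucker

section TotalPositivity

/-- Strict total positivity: every minor of `A` is positive, where a minor is taken along increasing
enumerations `f` of its rows and `g` of its columns. -/
def IsStrictlyTotallyPositive {m n R : Type*} [Preorder m] [Preorder n] [CommRing R] [Preorder R]
    (A : Matrix m n R) : Prop :=
  ∀ ⦃k : ℕ⦄ ⦃f : Fin k → m⦄ ⦃g : Fin k → n⦄, StrictMono f → StrictMono g →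
    0 < (A.submatrix f g).det

variable {R : Type*} [CommRing R] [LinearOrder R] [IsStrictOrderedRing R]

theorem det_submatrix_succAbove_pos {m : ℕ} {B : Matrix (Fin (m + 3)) (Fin (m + 2)) R}
    (hB : ∀ e : Fin (m + 1) → Fin (m + 3), StrictMono e → 0 < (B.submatrix e Fin.castSucc).det)
    (hsucc : 0 < (B.submatrix Fin.succ id).det) (hcastSucc : 0 < (B.submatrix Fin.castSucc id).det)
    (p : Fin (m + 1)) : 0 < (B.submatrix p.castSucc.succ.succAbove id).det := by
  have inner_pos := hB _ (Fin.strictMono_succ.comp Fin.strictMono_castSucc)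
  have first_pos := hB _ (Fin.strictMono_castSucc.comp (Fin.strictMono_succAbove p.succ))
  have last_pos := hB _ (Fin.strictMono_succ.comp (Fin.strictMono_succAbove p.castSucc))
  refine pos_of_mul_pos_right ?_ inner_pos.le
  rw [det_submatrix_plucker]
  positivity

theorem eq_zero_add_of_succ_eq_castSucc_add_one {n : ℕ} {f : Fin (n + 1) → ℕ}
    (hf : ∀ i : Fin n, f i.succ = f i.castSucc + 1) (i : Fin (n + 1)) : f i = f 0 + i := by
  induction i using Fin.induction with
  | zero => rfl
  | succ i ih => rw [hf, ih, Fin.val_succ, Fin.val_castSucc, add_assoc]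

theorem exists_strictMono_comp_succAbove_eq {n : ℕ} {f : Fin (n + 1) → ℕ} (hf : StrictMono f)
    {p : Fin n} (hp : f p.succ ≠ f p.castSucc + 1) :
    ∃ g : Fin (n + 2) → ℕ, StrictMono g ∧ g 0 = f 0 ∧ g (Fin.last _) = f (Fin.last _) ∧
      g ∘ p.castSucc.succ.succAbove = f := by
  have gap : f p.castSucc < f p.succ := hf Fin.castSucc_lt_succ
  let g : Fin (n + 2) → ℕ := Fin.insertNth p.castSucc.succ (f p.castSucc + 1) f
  have g_succAbove (i : Fin (n + 1)) : g (p.castSucc.succ.succAbove i) = f i :=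
    Fin.insertNth_apply_succAbove ..
  have p_ne_last : p.castSucc.succ ≠ Fin.last (n + 1) := by
    rw [← Fin.succ_last, Ne, Fin.succ_inj]
    exact (Fin.castSucc_lt_last p).ne
  refine ⟨g, Fin.strictMono_insertNth hf p _ (by lia) (by lia), ?_, ?_, funext g_succAbove⟩
  · rw [← g_succAbove 0, Fin.succAbove_ne_zero_zero (Fin.succ_ne_zero _)]
  · rw [← g_succAbove (Fin.last n), Fin.succAbove_ne_last_last p_ne_last]

theorem det_submatrix_pos_of_consecutive_rows {m : ℕ} {A : Matrix ℕ (Fin (m + 2)) R}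
    (hA : ∀ e : Fin (m + 1) → ℕ, StrictMono e → 0 < (A.submatrix e Fin.castSucc).det)
    (hcons : ∀ a, 0 < (A.submatrix (fun i : Fin (m + 2) => a + i) id).det)
    {f : Fin (m + 2) → ℕ} (hf : StrictMono f) : 0 < (A.submatrix f id).det := by
  induction hspread : f (Fin.last _) - f 0 using Nat.strong_induction_on generalizing f with
  | _ spread ih =>
    by_cases consecutive : ∀ i : Fin (m + 1), f i.succ = f i.castSucc + 1
    · rw [funext (eq_zero_add_of_succ_eq_castSucc_add_one consecutive)]
      exact hcons (f 0)
    · obtain ⟨p, hp⟩ := not_forall.1 consecutive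
      obtain ⟨g, hg, g_zero, g_last, rfl⟩ := exists_strictMono_comp_succAbove_eq hf hp
      have zero_lt : g 0 < g 1 := hg Fin.zero_lt_one
      have lt_last : g (Fin.last (m + 1)).castSucc < g (Fin.last _) := hg (Fin.castSucc_lt_last _)
      have one_le : g 1 ≤ g (Fin.last _) := hg.monotone (Fin.le_last _)
      refine det_submatrix_succAbove_pos (B := A.submatrix g id) (fun e he => hA _ (hg.comp he))
        (ih (g (Fin.last _) - g 1) (by lia) (hg.comp Fin.strictMono_succ) rfl)
        (ih (g (Fin.last _).castSucc - g 0) (by lia) (hg.comp Fin.strictMono_castSucc) rfl) p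

theorem isStrictlyTotallyPositive_of_consecutive_minors {A : Matrix ℕ ℕ R}
    (hA : ∀ k a b : ℕ, 0 < (of fun i j : Fin k => A (a + i) (b + j)).det) :
    IsStrictlyTotallyPositive A := by
  intro k
  induction k with
  | zero => simp
  | succ k ih =>
    cases k with
    | zero => exact fun f g _ _ => by simpa using hA 1 (f 0) (g 0)
    | succ m =>
      have consecutive_columns (b : ℕ) {f : Fin (m + 2) → ℕ} (hf : StrictMono f) :
          0 < (A.submatrix f fun j : Fin (m + 2) => b + j).det :=
        det_submatrix_pos_of_consecutive_rows (A := A.submatrix id fun j : Fin (m + 2) => b + j)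
          (fun e he => ih he fun i j h => Nat.add_lt_add_left h b) (fun a => hA (m + 2) a b) hf
      intro f g hf hg
      rw [← det_transpose]
      refine det_submatrix_pos_of_consecutive_rows (A := (A.submatrix f id)ᵀ)
        (fun e he => ?_) (fun b => ?_) hg
      · rw [← det_transpose]
        exact ih (hf.comp Fin.strictMono_castSucc) he
      · rw [← det_transpose]
        exact consecutive_columns b hf

theorem isStrictlyTotallyPositive_hankel {u : ℕ → R}
    (hu : ∀ k c : ℕ, 0 < (of fun i j : Fin k => u (c + i + j)).det) :
    IsStrictlyTotallyPositive (of fun a b => u (a + b)) :=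
  isStrictlyTotallyPositive_of_consecutive_minors fun k a b => by
    convert hu k (a + b) using 5 with i j
    exact congrArg u (by ring)

end TotalPositivity

section RationalNodes

theorem exists_eq_succ_div {ι : Type*} [Finite ι] (q : ι → Ioi (0 : ℚ)) :
    ∃ N > 0, ∃ k : ι → ℕ, ∀ i, (q i : ℚ) = (k i + 1 : ℕ) / (N : ℕ) := by
  have := Fintype.ofFinite ι
  let N := ∏ i, (q i : ℚ).den
  have N_pos : 0 < N := Finset.prod_pos fun i _ => (q i : ℚ).den_pos
  have exists_numerator (i : ι) : ∃ k : ℕ, (q i : ℚ) = (k + 1 : ℕ) / N := by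
    obtain ⟨c, hc⟩ : (q i : ℚ).den ∣ N := Finset.dvd_prod_of_mem _ (Finset.mem_univ i)
    have c_pos : 0 < c := Nat.pos_of_mul_pos_left (hc ▸ N_pos)
    have num_pos : 0 < (q i : ℚ).num := Rat.num_pos.2 (q i).2
    obtain ⟨k, hk⟩ := Int.eq_succ_of_zero_lt (mul_pos num_pos (Nat.cast_pos.2 c_pos))
    refine ⟨k, ?_⟩
    have hk : ((q i : ℚ).num * c : ℚ) = (k + 1 : ℕ) := by exact_mod_cast hk
    rw [← hk, hc, Nat.cast_mul, mul_div_mul_right _ _ (by positivity), Rat.num_div_den]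
  choose k hk using exists_numerator
  exact ⟨N, N_pos, k, hk⟩

theorem isStrictlyTotallyPositive_natGrid_of_posDef {φ : ℝ → ℝ}
    (hφ : (of fun x y : Ioi (0 : ℝ) => φ (x + y)).PosDef) {h : ℝ} (hh : 0 < h) :
    IsStrictlyTotallyPositive (of fun a b : ℕ => φ ((a + b + 2 : ℕ) * h)) := by
  refine isStrictlyTotallyPositive_hankel (u := fun n => φ ((n + 2 : ℕ) * h)) fun k c => ?_
  -- Giving each of the two nodes half of the offset `c` makes the Hankel section principal.
  let node (i : Fin k) : Ioi (0 : ℝ) := ⟨(c / 2 + 1 + i) * h, mem_Ioi.2 (by positivity)⟩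
  have node_injective : Function.Injective node := fun i j hij =>
    Fin.ext <| by simpa [node, hh.ne'] using hij
  have node_add (i j : Fin k) : (node i + node j : ℝ) = (c + i + j + 2 : ℕ) * h := by
    simp only [node]
    push_cast
    ring
  simpa [submatrix, node_add] using (hφ.submatrix node_injective).det_pos

theorem isStrictlyTotallyPositive_rat_of_posDef {φ : ℝ → ℝ}
    (hφ : (of fun x y : Ioi (0 : ℝ) => φ (x + y)).PosDef) :
    IsStrictlyTotallyPositive (of fun x y : Ioi (0 : ℚ) => φ (x + y : ℚ)) := by
  intro m f g hf hg
  obtain ⟨N, hN, k, hk⟩ := exists_eq_succ_div (Sum.elim f g)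
  have k_lt_iff (s t) : k s < k t ↔ Sum.elim f g s < Sum.elim f g t := by
    rw [← Subtype.coe_lt_coe, hk, hk, div_lt_div_iff_of_pos_right (by positivity), Nat.cast_lt,
      Nat.add_lt_add_iff_right]
  have k_inl : StrictMono (k ∘ Sum.inl) := fun i j hij => (k_lt_iff _ _).2 (hf hij)
  have k_inr : StrictMono (k ∘ Sum.inr) := fun i j hij => (k_lt_iff _ _).2 (hg hij)
  have add_eq (i j : Fin m) :
      ((f i + g j : ℚ) : ℝ) = (k (Sum.inl i) + k (Sum.inr j) + 2 : ℕ) * (N : ℝ)⁻¹ := by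
    have hf_eq : (f i : ℚ) = _ := hk (Sum.inl i)
    have hg_eq : (g j : ℚ) = _ := hk (Sum.inr j)
    rw [hf_eq, hg_eq]
    push_cast
    ring
  have grid_pos := isStrictlyTotallyPositive_natGrid_of_posDef hφ (h := (N : ℝ)⁻¹) (by positivity)
    k_inl k_inr
  simpa only [submatrix, of_apply, add_eq, Function.comp_apply] using grid_pos

end RationalNodes

/-- For positive rationals `q₁ < … < qₙ` and real `r > 0`, the entrywise power
`Q^{∘r}` of `Q = [(qᵢ + qⱼ)^(qᵢ + qⱼ)]` is positive definite and strictly totally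
positive. -/
theorem stmt_15 (n : ℕ) (q : Fin n → ℚ) (hpos : ∀ i, 0 < q i) (hmono : StrictMono q)
    (r : ℝ) (hr : 0 < r) :
    Matrix.PosDef (Matrix.of fun i j : Fin n =>
        ((q i + q j : ℚ) : ℝ) ^ (((q i + q j : ℚ) : ℝ) * r)) ∧
      ∀ (m : ℕ) (f g : Fin m → Fin n), StrictMono f → StrictMono g →
        0 < ((Matrix.of fun i j : Fin n =>
          ((q i + q j : ℚ) : ℝ) ^ (((q i + q j : ℚ) : ℝ) * r)).submatrix f g).det := by
  let node (i : Fin n) : Ioi (0 : ℚ) := ⟨q i, hpos i⟩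
  let realNode (i : Fin n) : Ioi (0 : ℝ) := ⟨q i, mem_Ioi.2 (Rat.cast_pos.2 (hpos i))⟩
  have node_strictMono : StrictMono node := hmono
  have realNode_injective : Function.Injective realNode := fun i j hij =>
    hmono.injective (Rat.cast_injective (congrArg Subtype.val hij))
  have kernel_posDef := posDef_rpow_add_self hr
  constructor
  · simpa [submatrix, realNode] using kernel_posDef.submatrix realNode_injective
  · intro m f g hf hg
    have minor_pos := isStrictlyTotallyPositive_rat_of_posDef (φ := fun t => t ^ (t * r))
      kernel_posDef (node_strictMono.comp hf) (node_strictMono.comp hg)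
    simpa only [submatrix, of_apply, Function.comp_apply, node] using minor_pos
end

section
/- Let n ≥ 1 and let K be the n×n matrix with (i,j) entry (i+j)^(i+j) for 1 ≤ i, j ≤ n. Then K is positive definite: ⟨x, Kx⟩ > 0 for every nonzero vector x ∈ ℝ^n. -/
/-!
Following Schoenberg, a matrix `F` whose quadratic form is positive on the nonzero vectors of
coordinate sum zero can be written `F i j = c i + c j + G i j`, where `G` and hence all its Hadamard
powers are positive semidefinite, and where `1 1ᵀ + G` is positive definite. The Taylor series of
`exp` begins with `1 + t` and has nonnegative coefficients, so the entrywise exponential of `G` is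
positive definite; that of `F` is congruent to it by a diagonal matrix.

It remains to treat `F i j = (a i + a j) log (a i + a j)`. On vectors of coordinate sum zero, the
quadratic forms `Q_f(s) = ∑ xᵢ xⱼ f (a i + a j + s)` of `f t = -(log t + 1)` and `f t = t log t`
tend to `0` as `s → ∞`. Differentiating in `s` leads from `t log t` to `log t + 1` and then to the
positive definite Cauchy kernel `1 / t`, so the signs propagate back from infinity.
-/

open Filter Finset Matrix Topology

section CauchyMatrix

variable {ι 𝕜 : Type*} [Field 𝕜]

lemma inv_add_eq_rankOne_add_rescale {a b c : 𝕜} (hab : a + b ≠ 0) (hac : a + c ≠ 0)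
    (hbc : b + c ≠ 0) :
    (a + b)⁻¹ = 2 * c * ((a + c)⁻¹ * (b + c)⁻¹) +
      (a - c) / (a + c) * (a + b)⁻¹ * ((b - c) / (b + c)) := by
  field_simp
  ring

-- The Schur complement of the pivot `k` in a Cauchy matrix is a diagonal rescaling of the
-- Cauchy matrix of the remaining parameters.
lemma sum_cauchy_insert [DecidableEq ι] {s : Finset ι} {k : ι} (hk : k ∉ s) {a : ι → 𝕜}
    (ha : ∀ i ∈ insert k s, ∀ j ∈ insert k s, a i + a j ≠ 0) (x : ι → 𝕜) :
    ∑ i ∈ insert k s, ∑ j ∈ insert k s, x i * (a i + a j)⁻¹ * x j =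
      2 * a k * (∑ i ∈ insert k s, x i * (a i + a k)⁻¹) ^ 2 +
        ∑ i ∈ s, ∑ j ∈ s, (x i * ((a i - a k) / (a i + a k))) * (a i + a j)⁻¹ *
          (x j * ((a j - a k) / (a j + a k))) := by
  set y : ι → 𝕜 := fun i => x i * ((a i - a k) / (a i + a k))
  have hyk : y k = 0 := by simp [y]
  have hy : ∑ i ∈ s, ∑ j ∈ s, y i * (a i + a j)⁻¹ * y j =
      ∑ i ∈ insert k s, ∑ j ∈ insert k s, y i * (a i + a j)⁻¹ * y j := by
    simp [sum_insert hk, hyk]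
  rw [hy, sq, sum_mul_sum, mul_sum, ← sum_add_distrib]
  refine sum_congr rfl fun i hi => ?_
  rw [mul_sum, ← sum_add_distrib]
  refine sum_congr rfl fun j hj => ?_
  have hks : k ∈ insert k s := mem_insert_self k s
  have hij := inv_add_eq_rankOne_add_rescale (ha i hi j hj) (ha i hi k hks) (ha j hj k hks)
  linear_combination x i * x j * hij

variable [LinearOrder 𝕜] [IsStrictOrderedRing 𝕜]

lemma sum_cauchy_pos {s : Finset ι} {a : ι → 𝕜} (ha : ∀ i ∈ s, 0 < a i)
    (hinj : Set.InjOn a s) {x : ι → 𝕜} (hx : ∃ i ∈ s, x i ≠ 0) :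
    0 < ∑ i ∈ s, ∑ j ∈ s, x i * (a i + a j)⁻¹ * x j := by
  classical
  induction s using Finset.induction_on generalizing x with
  | empty => simp at hx
  | insert k s hk ih =>
    have ha_k : 0 < a k := ha k (mem_insert_self k s)
    have ha_s : ∀ i ∈ s, 0 < a i := fun i hi => ha i (mem_insert_of_mem hi)
    have hinj_s : Set.InjOn a s := hinj.mono (coe_subset.mpr (subset_insert k s))
    rw [sum_cauchy_insert hk fun i hi j hj => (add_pos (ha i hi) (ha j hj)).ne']
    by_cases hx_s : ∃ i ∈ s, x i ≠ 0
    · obtain ⟨i, hi, hxi⟩ := hx_s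
      have hne : a i - a k ≠ 0 := fun h =>
        hk (hinj (mem_insert_of_mem hi) (mem_insert_self k s) (sub_eq_zero.mp h) ▸ hi)
      have hpos : a i + a k ≠ 0 := (add_pos (ha_s i hi) ha_k).ne'
      exact add_pos_of_nonneg_of_pos (by positivity)
        (ih ha_s hinj_s ⟨i, hi, mul_ne_zero hxi (div_ne_zero hne hpos)⟩)
    · push Not at hx_s
      have hxk : x k ≠ 0 := by
        obtain ⟨i, hi, hxi⟩ := hx
        obtain rfl | hi := mem_insert.mp hi
        exacts [hxi, absurd (hx_s i hi) hxi]
      have hsum : ∑ i ∈ s, x i * (a i + a k)⁻¹ = 0 :=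
        sum_eq_zero fun i hi => by rw [hx_s i hi, zero_mul]
      have hrest : ∑ i ∈ s, ∑ j ∈ s, (x i * ((a i - a k) / (a i + a k))) * (a i + a j)⁻¹ *
          (x j * ((a j - a k) / (a j + a k))) = 0 :=
        sum_eq_zero fun i hi => by simp [hx_s i hi]
      rw [sum_insert hk, hsum, hrest, add_zero, add_zero]
      have hpivot : x k * (a k + a k)⁻¹ ≠ 0 :=
        mul_ne_zero hxk (inv_ne_zero (add_pos ha_k ha_k).ne')
      exact mul_pos (by positivity) (sq_pos_of_ne_zero hpivot)

end CauchyMatrix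

section HankelForm

variable {ι : Type*} [Fintype ι]

/-- The quadratic form, evaluated at `x`, of the matrix with entries `f (a i + a j + s)`, as a
function of the translation parameter `s`, in which it is differentiated. -/
def hankelForm (f : ℝ → ℝ) (a x : ι → ℝ) (s : ℝ) : ℝ :=
  ∑ i, ∑ j, x i * f (a i + a j + s) * x j

variable {a x : ι → ℝ}

lemma hankelForm_neg (f : ℝ → ℝ) (s : ℝ) :
    hankelForm (fun t => -f t) a x s = -hankelForm f a x s := by
  simp [hankelForm]

lemma hankelForm_inv_pos (ha : ∀ i, 0 < a i) (hinj : Function.Injective a) (hx : x ≠ 0) {s : ℝ}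
    (hs : 0 ≤ s) : 0 < hankelForm (·⁻¹) a x s := by
  have hsplit : ∀ i j, a i + a j + s = (a i + s / 2) + (a j + s / 2) := fun i j => by ring
  simp only [hankelForm, hsplit]
  refine sum_cauchy_pos (fun i _ => add_pos_of_pos_of_nonneg (ha i) (by positivity))
    ((add_left_injective _).comp hinj).injOn ?_
  simpa using Function.ne_iff.mp hx

lemma hasDerivAt_hankelForm {f f' : ℝ → ℝ} {s : ℝ}
    (hf : ∀ i j, HasDerivAt f (f' (a i + a j + s)) (a i + a j + s)) :
    HasDerivAt (hankelForm f a x) (hankelForm f' a x s) s :=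
  HasDerivAt.fun_sum fun i _ => HasDerivAt.fun_sum fun j _ =>
    (((hf i j).comp_const_add _ _).const_mul (x i)).mul_const (x j)

lemma sum_affine_eq_zero_of_sum_eq_zero {R : Type*} [CommSemiring R] {x : ι → R}
    (hsum : ∑ i, x i = 0) (a : ι → R) (A B : R) :
    ∑ i, ∑ j, x i * (A + (a i + a j) * B) * x j = 0 := by
  have hsplit : ∀ i j, x i * (A + (a i + a j) * B) * x j =
      x i * (A + a i * B) * x j + x i * (a j * B * x j) := fun i j => by ring
  simp only [hsplit, sum_add_distrib, ← mul_sum, ← sum_mul, hsum, mul_zero, zero_mul,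
    sum_const_zero, add_zero]

lemma tendsto_hankelForm_atTop_zero (hsum : ∑ i, x i = 0) {f A B : ℝ → ℝ}
    (hf : ∀ m, Tendsto (fun s => f (m + s) - (A s + m * B s)) atTop (𝓝 0)) :
    Tendsto (hankelForm f a x) atTop (𝓝 0) := by
  have hsub : hankelForm f a x = fun s => ∑ i, ∑ j,
      x i * (f (a i + a j + s) - (A s + (a i + a j) * B s)) * x j := by
    funext s
    simp only [mul_sub, sub_mul, sum_sub_distrib, sum_affine_eq_zero_of_sum_eq_zero hsum a,
      sub_zero, hankelForm]
  have hlim : Tendsto (fun s => ∑ i, ∑ j,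
      x i * (f (a i + a j + s) - (A s + (a i + a j) * B s)) * x j) atTop
      (𝓝 (∑ i, ∑ j, x i * 0 * x j)) :=
    tendsto_finsetSum _ fun i _ => tendsto_finsetSum _ fun j _ =>
      ((hf (a i + a j)).const_mul (x i)).mul_const (x j)
  simpa [hsub] using hlim

lemma pos_of_deriv_neg_of_tendsto_zero {f f' : ℝ → ℝ} {c : ℝ}
    (hf : ∀ s, c ≤ s → HasDerivAt f (f' s) s) (hf' : ∀ s, c ≤ s → f' s < 0)
    (hlim : Tendsto f atTop (𝓝 0)) : 0 < f c := by
  have hanti : StrictAntiOn f (Set.Ici c) := by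
    refine strictAntiOn_of_hasDerivWithinAt_neg (convex_Ici c)
      (fun s hs => (hf s hs).continuousAt.continuousWithinAt)
      (fun s hs => (hf s (interior_subset hs)).hasDerivWithinAt)
      (fun s hs => hf' s (interior_subset hs))
  have hc : c + 1 ∈ Set.Ici c := by simp
  have hnonneg : 0 ≤ f (c + 1) := by
    refine le_of_tendsto hlim ?_
    filter_upwards [eventually_ge_atTop (c + 1)] with s hs
    exact hanti.antitoneOn hc (Set.mem_Ici.mpr (by linarith)) hs
  exact hnonneg.trans_lt (hanti Set.self_mem_Ici hc (by linarith))

lemma hankelForm_pos_of_deriv_neg (ha : ∀ i, 0 < a i) (hsum : ∑ i, x i = 0) {f f' A B : ℝ → ℝ}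
    (hf : ∀ t, 0 < t → HasDerivAt f (f' t) t)
    (hf' : ∀ s, 0 ≤ s → hankelForm f' a x s < 0)
    (hlim : ∀ m, Tendsto (fun s => f (m + s) - (A s + m * B s)) atTop (𝓝 0)) {s : ℝ}
    (hs : 0 ≤ s) : 0 < hankelForm f a x s :=
  pos_of_deriv_neg_of_tendsto_zero
    (fun _ ht => hasDerivAt_hankelForm fun i j =>
      hf _ (add_pos_of_pos_of_nonneg (add_pos (ha i) (ha j)) (hs.trans ht)))
    (fun t ht => hf' t (hs.trans ht)) (tendsto_hankelForm_atTop_zero hsum hlim)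

lemma tendsto_mul_log_add_sub_affine (m : ℝ) :
    Tendsto (fun s : ℝ => (m + s) * Real.log (m + s) -
      (s * Real.log s + m * (Real.log s + 1))) atTop (𝓝 0) := by
  have hlim := (Real.tendsto_mul_log_one_add_div_atTop m).add
    ((Real.tendsto_log_comp_add_sub_log m).const_mul m) |>.sub_const m
  rw [mul_zero, add_zero, sub_self] at hlim
  refine hlim.congr' ?_
  filter_upwards [eventually_gt_atTop 0, eventually_gt_atTop (-m)] with s hs hms
  have hlog : Real.log (1 + m / s) = Real.log (m + s) - Real.log s := by
    rw [one_add_div hs.ne', add_comm s m, Real.log_div (by linarith) hs.ne']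
  rw [hlog, add_comm s m]
  ring

lemma hankelForm_log_add_one_neg (ha : ∀ i, 0 < a i) (hinj : Function.Injective a) (hx : x ≠ 0)
    (hsum : ∑ i, x i = 0) {s : ℝ} (hs : 0 ≤ s) :
    hankelForm (fun t => Real.log t + 1) a x s < 0 := by
  have hpos : 0 < hankelForm (fun t => -(Real.log t + 1)) a x s := by
    refine hankelForm_pos_of_deriv_neg (f := fun t => -(Real.log t + 1)) (f' := fun t => -t⁻¹)
      (A := fun t => -(Real.log t + 1)) (B := 0) ha hsum
      (fun t ht => ((Real.hasDerivAt_log ht.ne').add_const 1).neg) (fun t ht => ?_) (fun m => ?_) hs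
    · simpa [hankelForm_neg] using hankelForm_inv_pos ha hinj hx ht
    · refine (neg_zero (G := ℝ) ▸ (Real.tendsto_log_comp_add_sub_log m).neg).congr fun t => ?_
      simp only [Pi.zero_apply, add_comm t m]
      ring
  rw [hankelForm_neg] at hpos
  exact neg_pos.mp hpos

lemma hankelForm_mul_log_pos (ha : ∀ i, 0 < a i) (hinj : Function.Injective a) (hx : x ≠ 0)
    (hsum : ∑ i, x i = 0) {s : ℝ} (hs : 0 ≤ s) :
    0 < hankelForm (fun t => t * Real.log t) a x s :=
  hankelForm_pos_of_deriv_neg ha hsum (fun _ ht => Real.hasDerivAt_mul_log ht.ne')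
    (fun _ ht => hankelForm_log_add_one_neg ha hinj hx hsum ht) tendsto_mul_log_add_sub_affine hs

end HankelForm

section EntrywiseExp

open scoped ComplexOrder

variable {ι 𝕜 : Type*} [RCLike 𝕜]

lemma posSemidef_of_one_s18 {R : Type*} [CommRing R] [PartialOrder R] [StarRing R] [StarOrderedRing R]
    [Finite ι] : (of 1 : Matrix ι ι R).PosSemidef := by
  simpa [vecMulVec_one] using! posSemidef_vecMulVec_self_star (1 : ι → R)

lemma posSemidef_map_pow_s18 [Finite ι] {G : Matrix ι ι 𝕜} (hG : G.PosSemidef) (k : ℕ) :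
    (G.map (· ^ k)).PosSemidef := by
  induction k with
  | zero => simpa [Matrix.map] using! posSemidef_of_one_s18 (ι := ι) (R := 𝕜)
  | succ k ih =>
    have hsucc : G.map (· ^ (k + 1)) = G.map (· ^ k) ⊙ G := by
      ext i j
      simp [pow_succ]
    exact hsucc ▸ ih.hadamard hG

lemma isClosed_setOf_posSemidef : IsClosed {M : Matrix ι ι 𝕜 | M.PosSemidef} := by
  simp only [PosSemidef, IsHermitian, Finsupp.sum, Set.ofPred_and, Set.ofPred_forall]
  exact (isClosed_eq (by fun_prop) continuous_id).inter
    (isClosed_iInter fun x => isClosed_le continuous_const (by fun_prop))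

lemma posSemidef_of_hasSum {κ : Type*} {A : κ → Matrix ι ι 𝕜} {M : Matrix ι ι 𝕜}
    (hA : ∀ k, (A k).PosSemidef) (hM : HasSum A M) : M.PosSemidef :=
  isClosed_setOf_posSemidef.mem_of_tendsto hM
    (Eventually.of_forall fun s => posSemidef_sum s fun k _ => hA k)

lemma hasSum_exp_sub_one_sub (t : ℝ) :
    HasSum (fun k : ℕ => ((k + 2).factorial : ℝ)⁻¹ * t ^ (k + 2)) (Real.exp t - (1 + t)) := by
  have hexp : HasSum (fun k : ℕ => t ^ k / (k.factorial : ℝ)) (Real.exp t) := by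
    rw [Real.exp_eq_exp_ℝ]
    exact NormedSpace.expSeries_div_hasSum_exp t
  simpa [sum_range_succ, div_eq_inv_mul] using (hasSum_nat_add_iff' 2).mpr hexp

lemma posSemidef_map_exp_sub_one_sub [Finite ι] {G : Matrix ι ι ℝ} (hG : G.PosSemidef) :
    (G.map fun t => Real.exp t - (1 + t)).PosSemidef := by
  refine posSemidef_of_hasSum (A := fun k : ℕ => ((k + 2).factorial : ℝ)⁻¹ • G.map (· ^ (k + 2)))
    (fun k => (posSemidef_map_pow_s18 hG (k + 2)).smul (by positivity)) ?_
  exact Pi.hasSum.mpr fun i => Pi.hasSum.mpr fun j => hasSum_exp_sub_one_sub (G i j)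

end EntrywiseExp

section Schoenberg

variable {ι R : Type*}

/-- The matrix `F` recentred at the index `o`, so that its row and column `o` vanish. Its quadratic
form is that of `F` after projecting along `Pi.single o 1` to the vectors of coordinate sum zero. -/
def centeredAt [AddCommGroup R] (F : Matrix ι ι R) (o : ι) : Matrix ι ι R :=
  of fun i j => F i j - F i o - F o j + F o o

variable [Fintype ι]

lemma dotProduct_of_one_mulVec [NonAssocSemiring R] (x y : ι → R) :
    x ⬝ᵥ of 1 *ᵥ y = (∑ i, x i) * ∑ i, y i := by
  simp [dotProduct, mulVec, sum_mul]

lemma dotProduct_centeredAt_mulVec [DecidableEq ι] [CommRing R] (F : Matrix ι ι R) (o : ι)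
    (y : ι → R) :
    y ⬝ᵥ centeredAt F o *ᵥ y =
      (y - (∑ i, y i) • Pi.single o 1) ⬝ᵥ F *ᵥ (y - (∑ i, y i) • Pi.single o 1) := by
  have hF : centeredAt F o =
      F - vecMulVec (F.col o) 1 - vecMulVec 1 (F.row o) + F o o • vecMulVec 1 1 := by
    ext i j
    simp [centeredAt, -vecMulVec_one, -one_vecMulVec, vecMulVec_apply]
  have hrow : F.row o ⬝ᵥ y = (F *ᵥ y) o := rfl
  simp only [hF, add_mulVec, sub_mulVec, smul_mulVec, vecMulVec_mulVec, mulVec_sub, mulVec_smul,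
    mulVec_single_one, dotProduct_add, dotProduct_sub, dotProduct_smul, sub_dotProduct,
    smul_dotProduct, single_one_dotProduct, one_dotProduct, dotProduct_one, hrow, col_apply,
    op_smul_eq_smul, smul_eq_mul]
  ring

/-- Strict conditional positive definiteness: the quadratic form of the symmetric matrix `F` is
positive on the nonzero vectors of coordinate sum zero. -/
structure CondPosDef (F : Matrix ι ι ℝ) : Prop where
  isHermitian : F.IsHermitian
  pos : ∀ x : ι → ℝ, x ≠ 0 → ∑ i, x i = 0 → 0 < x ⬝ᵥ F *ᵥ x

namespace CondPosDef

variable {F : Matrix ι ι ℝ}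

lemma apply_comm (hF : CondPosDef F) (i j : ι) : F i j = F j i :=
  hF.isHermitian.apply j i

lemma posSemidef_centeredAt (hF : CondPosDef F) (o : ι) : (centeredAt F o).PosSemidef := by
  classical
  refine .of_dotProduct_mulVec_nonneg ?_ fun y => ?_
  · ext i j
    simp only [centeredAt, conjTranspose_apply, of_apply, star_trivial]
    rw [hF.apply_comm j i, hF.apply_comm j o, hF.apply_comm o i]
    ring
  · rw [star_trivial, dotProduct_centeredAt_mulVec]
    set z : ι → ℝ := y - (∑ i, y i) • Pi.single o 1 with hz
    by_cases hz0 : z = 0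
    · simp [hz0]
    · exact (hF.pos z hz0 (by simp [hz, ← mul_sum])).le

lemma posDef_of_one_add_centeredAt (hF : CondPosDef F) (o : ι) :
    (of 1 + centeredAt F o).PosDef := by
  classical
  have hG := hF.posSemidef_centeredAt o
  refine .of_dotProduct_mulVec_pos
    (posSemidef_of_one_s18.isHermitian.add hG.isHermitian) fun y hy => ?_
  have hform : star y ⬝ᵥ (of 1 + centeredAt F o) *ᵥ y =
      (∑ i, y i) ^ 2 + y ⬝ᵥ centeredAt F o *ᵥ y := by
    rw [star_trivial, add_mulVec, dotProduct_add, dotProduct_of_one_mulVec, sq]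
  rw [hform]
  by_cases hsum : ∑ i, y i = 0
  · simpa [dotProduct_centeredAt_mulVec, hsum] using hF.pos y hy hsum
  · exact add_pos_of_pos_of_nonneg (by positivity) (hG.dotProduct_mulVec_nonneg y)

lemma posDef_map_exp_centeredAt (hF : CondPosDef F) (o : ι) :
    ((centeredAt F o).map Real.exp).PosDef := by
  have hsplit : (centeredAt F o).map Real.exp = (of 1 + centeredAt F o) +
      (centeredAt F o).map fun t => Real.exp t - (1 + t) := by
    ext i j
    simp
  exact hsplit ▸ (hF.posDef_of_one_add_centeredAt o).add_posSemidef
    (posSemidef_map_exp_sub_one_sub (hF.posSemidef_centeredAt o))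

-- `F i j = c i + c j + G i j` with `G = centeredAt F o` and `c i = F i o - F o o / 2`.
theorem posDef_map_exp (hF : CondPosDef F) : (F.map Real.exp).PosDef := by
  classical
  rcases isEmpty_or_nonempty ι with _ | ⟨⟨o⟩⟩
  · exact .of_dotProduct_mulVec_pos (Subsingleton.elim _ _)
      fun x hx => absurd (Subsingleton.elim x 0) hx
  set D : Matrix ι ι ℝ := diagonal fun i => Real.exp (F i o - F o o / 2) with hD
  have hfactor : F.map Real.exp = Dᴴ * (centeredAt F o).map Real.exp * D := by
    ext i j
    simp only [hD, centeredAt, diagonal_conjTranspose, star_trivial, diagonal_mul, mul_diagonal,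
      map_apply, of_apply, ← Real.exp_add, hF.apply_comm o j]
    ring_nf
  have hinj : Function.Injective D.mulVec :=
    mulVec_injective_of_isUnit (by simp [hD, isUnit_diagonal, Pi.isUnit_iff])
  exact hfactor ▸ (hF.posDef_map_exp_centeredAt o).conjTranspose_mul_mul_same hinj

end CondPosDef

end Schoenberg

lemma condPosDef_mul_log {ι : Type*} [Fintype ι] {a : ι → ℝ} (ha : ∀ i, 0 < a i)
    (hinj : Function.Injective a) :
    CondPosDef (of fun i j => (a i + a j) * Real.log (a i + a j)) where
  isHermitian := by
    ext i j
    simp [add_comm (a i)]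
  pos x hx hsum := by
    simpa [hankelForm, dotProduct, mulVec, mul_sum, mul_assoc] using
      hankelForm_mul_log_pos ha hinj hx hsum le_rfl

lemma posDef_of_forall_finset_submatrix {ι R : Type*} [Ring R] [PartialOrder R] [StarRing R]
    {M : Matrix ι ι R}
    (hM : ∀ s : Finset ι, (M.submatrix ((↑) : s → ι) ((↑) : s → ι)).PosDef) : M.PosDef := by
  refine ⟨?_, fun x hx => ?_⟩
  · classical
    ext i j
    exact (hM {i, j}).isHermitian.apply ⟨i, by simp⟩ ⟨j, by simp⟩
  · have hmem : ∀ i ∈ x.support, i ∈ x.support := fun _ => id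
    have hpos := (hM x.support).2 (mt (Finsupp.subtypeDomain_eq_zero_iff hmem).mp hx)
    rw [← Finsupp.sum_subtypeDomain_index (p := (· ∈ x.support)) hmem]
    refine hpos.trans_eq (Finsupp.sum_congr fun i _ => ?_)
    exact Finsupp.sum_subtypeDomain_index (h := fun j xj => star (x i) * M i j * xj) hmem

theorem stmt_18_general {ι : Type*} {a : ι → ℝ} (ha : ∀ i, 0 < a i)
    (hinj : Function.Injective a) :
    PosDef (of fun i j => (a i + a j) ^ (a i + a j)) := by
  refine posDef_of_forall_finset_submatrix fun s => ?_
  convert (condPosDef_mul_log (a := fun i : s => a i) (fun i => ha i)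
    (hinj.comp Subtype.val_injective)).posDef_map_exp using 1
  ext i j
  simp [Real.rpow_def_of_pos (add_pos (ha i) (ha j)), mul_comm]

/-- The matrix `[(i+j)^(i+j)]` (indices running from 1 to n) is positive
definite. -/
theorem stmt_18 (n : ℕ) (hn : 1 ≤ n) :
    Matrix.PosDef (Matrix.of fun i j : Fin n =>
      (((((i : ℕ) + 1) + ((j : ℕ) + 1)) ^ (((i : ℕ) + 1) + ((j : ℕ) + 1)) : ℕ) : ℝ)) := by
  convert stmt_18_general (a := fun i : Fin n => ((i + 1 : ℕ) : ℝ)) (fun i => by positivity)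
    (fun i j hij => by simpa [Fin.val_inj] using hij) using 5
  rw [Nat.cast_pow, ← Real.rpow_natCast, Nat.cast_add]
end
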